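/- Along any solution of the closed-loop error dynamics (with the hypotheses of the Lyapunov-decrease statement, and with e_ζ, e_ψ continuously differentiable), the damping term is integrable with explicit bound: for every T ≥ 0, ∫₀ᵀ ‖k₂·e_ζ(t) + k₃·e_ψ(t)‖² dt ≤ V(e_ζ(0), e_ψ(0)). -/

import Mathlib

/-!
The matrices `k₁, k₂, k₃` are diagonal, so everything decouples into scalar systems with gains
`a, b, c > 0` satisfying `c - b² / a > 0`. For one coordinate, with `w = b x + c y`, substituting
`y' = -(a / b) x' - w` in the derivative of `(a x² + 2 b x y + c y²) / 2` gives
`-w² - (a / b) (c - b² / a) x' y`. Here `x' y ≥ 0`, because `x'` is a nonnegative multiple of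
`tanh (y + r) - tanh r`, which has the sign of `y`. Hence `V' ≤ -‖w‖²` along solutions
(`coord_decrease`), and integrating over `[0, T]` and dropping `V(T) ≥ 0` (`coord_nonneg`)
yields the bound.
-/


open Matrix

lemma coord_nonneg {a b c : ℝ} (ha : 0 < a) (hs : 0 < c - b * a⁻¹ * b) (x y : ℝ) :
    0 ≤ (1 / 2) * (a * x ^ 2 + 2 * (b * (x * y)) + c * y ^ 2) := by
  have h : (1 / 2) * (a * x ^ 2 + 2 * (b * (x * y)) + c * y ^ 2)
      = (1 / 2) * (a * (x + b / a * y) ^ 2 + (c - b * a⁻¹ * b) * y ^ 2) := by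
    field_simp
    ring
  rw [h]
  positivity

lemma coord_decrease {a b c : ℝ} (ha : 0 < a) (hb : 0 < b) (hs : 0 < c - b * a⁻¹ * b)
    {x y x' y' : ℝ} (hxy : 0 ≤ x' * y) (hy' : y' = -(b⁻¹ * a * x') - b * x - c * y) :
    a * (x * x') + b * (x' * y + x * y') + c * (y * y') ≤ -(b * x + c * y) ^ 2 := by
  have h : a * (x * x') + b * (x' * y + x * y') + c * (y * y')
      = -(b * x + c * y) ^ 2 - a / b * (c - b * a⁻¹ * b) * (x' * y) := by
    rw [hy']
    field_simp
    ring
  have h2 : 0 ≤ a / b * (c - b * a⁻¹ * b) * (x' * y) := by positivity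
  linarith

lemma tanh_monotone : Monotone Real.tanh := by
  intro x y h
  have hmem : ∀ z, Real.tanh z ∈ Set.Ioo (-1 : ℝ) 1 := fun z =>
    ⟨Real.neg_one_lt_tanh z, Real.tanh_lt_one z⟩
  rw [← Real.artanh_le_artanh_iff (hmem x) (hmem y), Real.artanh_tanh, Real.artanh_tanh]
  exact h

lemma tanh_sub_mul_nonneg (y r : ℝ) : 0 ≤ (Real.tanh (y + r) - Real.tanh r) * y := by
  rcases le_total 0 y with h | h
  · exact mul_nonneg (sub_nonneg.2 (tanh_monotone (by linarith))) h
  · exact mul_nonneg_of_nonpos_of_nonpos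
      (sub_nonpos.2 (tanh_monotone (by linarith))) h

/-- Positivity makes the diagonal matrix invertible, so `⁻¹` is its genuine inverse. -/
lemma inv_diagonal_of_pos {n : ℕ} {d : Fin n → ℝ} (hd : ∀ i, 0 < d i) :
    (diagonal d)⁻¹ = diagonal fun i => (d i)⁻¹ := by
  apply Matrix.inv_eq_right_inv
  rw [diagonal_mul_diagonal, ← diagonal_one]
  congr 1
  ext i
  exact mul_inv_cancel₀ (hd i).ne'

/-- Along any (continuously differentiable) solution of the
closed-loop error dynamics, the damping term is integrable with explicit bound:
for every T ≥ 0, ∫₀ᵀ ‖k₂e_ζ(t) + k₃e_ψ(t)‖² dt ≤ V(e_ζ(0), e_ψ(0)). -/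
theorem stmt_13 (n : ℕ) (hn : 1 ≤ n)
    (δq δqdot : Fin n → ℝ) (hδq : ∀ i, 0 < δq i) (hδqdot : ∀ i, 0 < δqdot i)
    (k₁ k₂ k₃ : Matrix (Fin n) (Fin n) ℝ)
    (hd₁ : k₁.IsDiag) (hd₂ : k₂.IsDiag) (hd₃ : k₃.IsDiag)
    (hpd₁ : k₁.PosDef) (hpd₂ : k₂.PosDef) (hpd₃ : k₃.PosDef)
    (hpds : (k₃ - k₂ * k₁⁻¹ * k₂).PosDef)
    (V : (Fin n → ℝ) → (Fin n → ℝ) → ℝ)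
    (hV : ∀ eζ eψ, V eζ eψ = (1 / 2) *
      (eζ ⬝ᵥ k₁.mulVec eζ + 2 * (eζ ⬝ᵥ k₂.mulVec eψ) + eψ ⬝ᵥ k₃.mulVec eψ))
    (eζ eψ ψr ζ ψ : ℝ → (Fin n → ℝ))
    (hψ : ∀ t, ψ t = eψ t + ψr t)
    (Jζ : ℝ → Matrix (Fin n) (Fin n) ℝ)
    (hJζ : ∀ t, Jζ t = Matrix.diagonal fun i => δq i * (1 - Real.tanh (ζ t i) ^ 2))
    (eζ' : ℝ → (Fin n → ℝ))
    (heζ' : ∀ t, eζ' t = ((Jζ t)⁻¹ * Matrix.diagonal δqdot).mulVec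
      (fun i => Real.tanh (ψ t i) - Real.tanh (ψr t i)))
    (hderivζ : ∀ t ∈ Set.Ici (0 : ℝ), HasDerivAt eζ (eζ' t) t)
    (hderivψ : ∀ t ∈ Set.Ici (0 : ℝ), HasDerivAt eψ
      (-(k₂⁻¹ * k₁).mulVec (eζ' t) - k₂.mulVec (eζ t) - k₃.mulVec (eψ t)) t)
    (hC1 : ContinuousOn eζ' (Set.Ici (0 : ℝ))) :
    ∀ T : ℝ, 0 ≤ T →
      (∫ t in (0 : ℝ)..T,
          (k₂.mulVec (eζ t) + k₃.mulVec (eψ t)) ⬝ᵥ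
            (k₂.mulVec (eζ t) + k₃.mulVec (eψ t)))
        ≤ V (eζ 0) (eψ 0) := by
  intro T hT
  obtain ⟨a, rfl⟩ : ∃ a, k₁ = diagonal a := ⟨_, hd₁.diagonal_diag.symm⟩
  obtain ⟨b, rfl⟩ : ∃ b, k₂ = diagonal b := ⟨_, hd₂.diagonal_diag.symm⟩
  obtain ⟨c, rfl⟩ : ∃ c, k₃ = diagonal c := ⟨_, hd₃.diagonal_diag.symm⟩
  have ha : ∀ i, 0 < a i := posDef_diagonal_iff.1 hpd₁
  have hb : ∀ i, 0 < b i := posDef_diagonal_iff.1 hpd₂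
  have hs : ∀ i, 0 < c i - b i * (a i)⁻¹ * b i := by
    rw [inv_diagonal_of_pos ha, diagonal_mul_diagonal, diagonal_mul_diagonal, diagonal_sub] at hpds
    exact posDef_diagonal_iff.1 hpds
  have hJpos : ∀ t i, 0 < δq i * (1 - Real.tanh (ζ t i) ^ 2) := fun t i =>
    mul_pos (hδq i) (sub_pos.2 (Real.tanh_sq_lt_one _))
  have hxy : ∀ t i, 0 ≤ eζ' t i * eψ t i := by
    intro t i
    have h1 : eζ' t i = (δq i * (1 - Real.tanh (ζ t i) ^ 2))⁻¹ * δqdot i *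
        (Real.tanh (eψ t i + ψr t i) - Real.tanh (ψr t i)) := by
      rw [heζ', hJζ, inv_diagonal_of_pos (hJpos t), diagonal_mul_diagonal, mulVec_diagonal, hψ]
      rfl
    rw [h1, mul_assoc]
    exact mul_nonneg (mul_nonneg (inv_nonneg.2 (hJpos t i).le) (hδqdot i).le)
      (tanh_sub_mul_nonneg _ _)
  have hVsum : ∀ t, V (eζ t) (eψ t) = ∑ i, (1 / 2) * (a i * eζ t i ^ 2 +
      2 * (b i * (eζ t i * eψ t i)) + c i * eψ t i ^ 2) := by
    intro t
    rw [hV]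
    simp only [dotProduct, mulVec_diagonal, Finset.mul_sum, ← Finset.sum_add_distrib]
    exact Finset.sum_congr rfl fun i _ => by ring
  have hwsum : ∀ t, (diagonal b *ᵥ eζ t + diagonal c *ᵥ eψ t) ⬝ᵥ
      (diagonal b *ᵥ eζ t + diagonal c *ᵥ eψ t) = ∑ i, (b i * eζ t i + c i * eψ t i) ^ 2 := by
    intro t
    simp only [dotProduct, Pi.add_apply, mulVec_diagonal]
    exact Finset.sum_congr rfl fun i _ => by ring
  set y' : ℝ → Fin n → ℝ := fun t i =>
    -((b i)⁻¹ * a i * eζ' t i) - b i * eζ t i - c i * eψ t i with hy'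
  have hx : ∀ t, 0 ≤ t → ∀ i, HasDerivAt (fun s => eζ s i) (eζ' t i) t := fun t ht i =>
    hasDerivAt_pi.1 (hderivζ t ht) i
  have hy : ∀ t, 0 ≤ t → ∀ i, HasDerivAt (fun s => eψ s i) (y' t i) t := by
    intro t ht i
    refine (hasDerivAt_pi.1 (hderivψ t ht) i).congr_deriv ?_
    rw [inv_diagonal_of_pos hb, diagonal_mul_diagonal]
    simp [hy', mulVec_diagonal]
  have hVderiv : ∀ t, 0 ≤ t → HasDerivAt (fun s => V (eζ s) (eψ s))
      (∑ i, (a i * (eζ t i * eζ' t i) + b i * (eζ' t i * eψ t i + eζ t i * y' t i) +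
        c i * (eψ t i * y' t i))) t := by
    intro t ht
    simp only [hVsum]
    refine HasDerivAt.fun_sum fun i _ => ?_
    have hx := hx t ht i
    have hy := hy t ht i
    refine (((((hx.fun_pow 2).const_mul (a i)).fun_add
      (((hx.fun_mul hy).const_mul (b i)).const_mul 2)).fun_add
      ((hy.fun_pow 2).const_mul (c i))).const_mul (1 / 2)).congr_deriv ?_
    push_cast
    ring
  have hwcont : ContinuousOn (fun t => -∑ i, (b i * eζ t i + c i * eψ t i) ^ 2)
      (Set.Icc 0 T) := by
    refine (continuousOn_finsetSum _ fun i _ => ?_).neg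
    have h1 : ContinuousOn (fun s => eζ s i) (Set.Icc 0 T) := fun t ht =>
      (hx t ht.1 i).continuousAt.continuousWithinAt
    have h2 : ContinuousOn (fun s => eψ s i) (Set.Icc 0 T) := fun t ht =>
      (hy t ht.1 i).continuousAt.continuousWithinAt
    fun_prop
  -- Only the upper bound `-‖w‖²` on the derivative of `V` is integrated, not the derivative itself.
  have key := intervalIntegral.sub_le_integral_of_hasDeriv_right_of_le hT
    (fun t ht => (hVderiv t ht.1).continuousAt.continuousWithinAt)
    (fun t ht => (hVderiv t ht.1.le).hasDerivWithinAt)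
    hwcont.integrableOn_Icc (fun t _ => by
      rw [← Finset.sum_neg_distrib]
      exact Finset.sum_le_sum fun i _ => coord_decrease (ha i) (hb i) (hs i) (hxy t i) rfl)
  have hVT : 0 ≤ V (eζ T) (eψ T) := by
    rw [hVsum]
    exact Finset.sum_nonneg fun i _ => coord_nonneg (ha i) (hs i) _ _
  rw [intervalIntegral.integral_neg] at key
  simp only [hwsum]
  linarith
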